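/- In the DP setting with children a and b of a non-leaf node v: let A, B ⊆ V_R be disjoint and X = A ∪ B. Suppose (m^a_V, m^a_E) is a desirable mapping of G_R[A] into T_a and (m^b_V, m^b_E) is a desirable mapping of G_R[B] into T_b, and suppose Σ_{e ∈ cut(A)} d_R(e) ≤ d_S(a, v), Σ_{e ∈ cut⁻(A)} d_R(e) ≤ d_S(v, a), Σ_{e ∈ cut(B)} d_R(e) ≤ d_S(b, v) and Σ_{e ∈ cut⁻(B)} d_R(e) ≤ d_S(v, b). Then the combined mapping of G_R[X] into T_v — with m_V agreeing with m^a_V on A and with m^b_V on B, with m_E agreeing with m^a_E on edges inside A and with m^b_E on edges inside B, and mapping each request edge between A and B to the unique directed path in T_v between the images of its endpoints (which passes through v) — is a desirable mapping of G_R[X] into T_v, and its induced cost equals the sum of the induced costs of (m^a_V, m^a_E) and (m^b_V, m^b_E) plus Σ_{e ∈ cut⁻(A)} ⟨d_R(e), c_S(v, a)⟩ + Σ_{e ∈ cut(A)} ⟨d_R(e), c_S(a, v)⟩ + Σ_{e ∈ cut⁻(B)} ⟨d_R(e), c_S(v, b)⟩ + Σ_{e ∈ cut(B)} ⟨d_R(e),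 c_S(b, v)⟩. -/

import Mathlib

open scoped BigOperators NNReal ENNReal Classical

/-- A rooted tree on vertex set `V`: a root together with a parent function such that the
root is its own parent and every vertex reaches the root by iterating the parent function.
The associated bidirectional tree substrate has the directed edges `(u, v)` and `(v, u)`
for every non-root `u` with parent `v`. -/
structure RTree (V : Type*) where
  root : V
  parent : V → V
  parent_root : parent root = root
  reaches_root : ∀ v : V, ∃ n : ℕ, parent^[n] v = root

namespace RTree

variable {V : Type*}

/-- `u` is a child of `v`. -/
def IsChild (T : RTree V) (u v : V) : Prop := u ≠ v ∧ T.parent u = v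

/-- `w` lies in the subtree `T_v` rooted at `v` (i.e. `w` is `v` or a descendant of `v`). -/
def InSubtree (T : RTree V) (v w : V) : Prop := ∃ n : ℕ, T.parent^[n] w = v

/-- The directed edge set of the bidirectional tree substrate associated to a rooted tree:
both orientations of every parent-child pair. -/
noncomputable def edges [Fintype V] [DecidableEq V] (T : RTree V) : Finset (V × V) :=
  Finset.univ.filter fun e => e.1 ≠ e.2 ∧ (T.parent e.1 = e.2 ∨ T.parent e.2 = e.1)

end RTree

/-- A VNEP instance: a substrate digraph `(VS, ES)` with `τ`-dimensional node and edge
capacities (`dSv`, `dSe`, valued in `[0, ∞]`) and costs (`cSv`, `cSe`), and a request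
digraph `(VR, ER)` with `τ`-dimensional node and edge demands (`dRv`, `dRe`). -/
structure VNEP (VS VR : Type*) (τ : ℕ) where
  ES : Finset (VS × VS)
  ER : Finset (VR × VR)
  dSv : VS → Fin τ → ℝ≥0∞
  dSe : VS × VS → Fin τ → ℝ≥0∞
  cSv : VS → Fin τ → ℝ≥0
  cSe : VS × VS → Fin τ → ℝ≥0
  dRv : VR → Fin τ → ℝ≥0
  dRe : VR × VR → Fin τ → ℝ≥0

/-- The list of directed edges traversed by a path given as a list of vertices. -/
def pathEdges {α : Type*} (p : List α) : List (α × α) := p.zip p.tail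

/-- A simple directed path from `a` to `b` with respect to the edge relation `E`, given as
its (nonempty, duplicate-free) list of vertices; a single-vertex list is a path of length
zero. -/
def IsDiPath {α : Type*} (E : α → α → Prop) (a b : α) (p : List α) : Prop :=
  p.head? = some a ∧ p.getLast? = some b ∧ List.Chain' E p ∧ p.Nodup

/-- A mapping of a request into a substrate: `mV` maps request nodes to substrate nodes and
`mE` assigns to each request edge a list of substrate vertices (its intended path). -/
structure Mapping (VS VR : Type*) where
  mV : VR → VS
  mE : VR × VR → List VS

section VNEPDefs

variable {VS VR : Type*} {τ : ℕ}

/-- A mapping is valid if every request edge is mapped to a simple directed path in the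
substrate between the images of its endpoints. -/
def Mapping.Valid (I : VNEP VS VR τ) (M : Mapping VS VR) : Prop :=
  ∀ e ∈ I.ER, IsDiPath (fun a b => (a, b) ∈ I.ES) (M.mV e.1) (M.mV e.2) (M.mE e)

/-- A mapping is feasible if it is valid and all node and edge capacities are respected by
the cumulative demands mapped onto them. -/
noncomputable def Mapping.Feasible [Fintype VR] [DecidableEq VS] (I : VNEP VS VR τ)
    (M : Mapping VS VR) : Prop :=
  M.Valid I ∧
  (∀ v : VS, ∀ t : Fin τ,
    ((∑ w ∈ Finset.univ.filter (fun w => M.mV w = v), I.dRv w t : ℝ≥0) : ℝ≥0∞) ≤ I.dSv v t) ∧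
  (∀ eS ∈ I.ES, ∀ t : Fin τ,
    ((∑ eR ∈ I.ER.filter (fun eR => eS ∈ pathEdges (M.mE eR)), I.dRe eR t : ℝ≥0) : ℝ≥0∞) ≤
      I.dSe eS t)

/-- The cost of a mapping: `∑_w ⟨d_R(w), c_S(m_V(w))⟩ + ∑_{e ∈ E_R} ∑_{e' ∈ m_E(e)}
⟨d_R(e), c_S(e')⟩`. -/
noncomputable def Mapping.cost [Fintype VR] [DecidableEq VS] (I : VNEP VS VR τ)
    (M : Mapping VS VR) : ℝ≥0 :=
  (∑ w : VR, ∑ t, I.dRv w t * I.cSv (M.mV w) t) +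
    ∑ e ∈ I.ER, ∑ e' ∈ (pathEdges (M.mE e)).toFinset, ∑ t, I.dRe e t * I.cSe e' t

end VNEPDefs
section DPDefs

variable {VS VR : Type*} {τ : ℕ}

/-- The set of children of `v` in the rooted tree `T`. -/
noncomputable def childrenOf [Fintype VS] (T : RTree VS) (v : VS) : Finset VS :=
  Finset.univ.filter fun w => T.IsChild w v

/-- `cut(A)`: the request edges leaving `A`. -/
noncomputable def cutP (I : VNEP VS VR τ) (A : Finset VR) : Finset (VR × VR) :=
  I.ER.filter fun e => e.1 ∈ A ∧ e.2 ∉ A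

/-- `cut⁻(A)`: the request edges entering `A`. -/
noncomputable def cutN (I : VNEP VS VR τ) (A : Finset VR) : Finset (VR × VR) :=
  I.ER.filter fun e => e.1 ∉ A ∧ e.2 ∈ A

/-- `E(G_R[X])`: the request edges with both endpoints in `X`. -/
noncomputable def ERin (I : VNEP VS VR τ) (X : Finset VR) : Finset (VR × VR) :=
  I.ER.filter fun e => e.1 ∈ X ∧ e.2 ∈ X

/-- The auxiliary function `f(v, x, R)` of the dynamic program. -/
noncomputable def fDP (I : VNEP VS VR τ) (D : Finset VR → VS → ℝ≥0∞) (v x : VS)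
    (R : Finset VR) : ℝ≥0∞ :=
  if (∀ t, ((∑ e ∈ cutP I R, I.dRe e t : ℝ≥0) : ℝ≥0∞) ≤ I.dSe (x, v) t) ∧
      (∀ t, ((∑ e ∈ cutN I R, I.dRe e t : ℝ≥0) : ℝ≥0∞) ≤ I.dSe (v, x) t) then
    D R x + ((∑ e ∈ cutN I R, ∑ t, I.dRe e t * I.cSe (v, x) t : ℝ≥0) : ℝ≥0∞)
          + ((∑ e ∈ cutP I R, ∑ t, I.dRe e t * I.cSe (x, v) t : ℝ≥0) : ℝ≥0∞)
  else ⊤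

/-- `D` is the DP table: it satisfies the defining recurrence of the dynamic program
(leaf case and internal-node case). -/
def IsDPTable [Fintype VS] (I : VNEP VS VR τ) (T : RTree VS)
    (D : Finset VR → VS → ℝ≥0∞) : Prop :=
  (∀ v : VS, childrenOf T v = ∅ → ∀ R : Finset VR,
    D R v = if (∀ t, ((∑ w ∈ R, I.dRv w t : ℝ≥0) : ℝ≥0∞) ≤ I.dSv v t) then
      ((∑ w ∈ R, ∑ t, I.dRv w t * I.cSv v t : ℝ≥0) : ℝ≥0∞) else ⊤) ∧
  (∀ v a b : VS, a ≠ b → childrenOf T v = {a, b} → ∀ R : Finset VR,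
    D R v = ⨅ A ∈ R.powerset, fDP I D v a A + fDP I D v b (R \ A))

/-- The DP setting: the substrate is the bidirectional tree given by `T`, every node of `T`
is a leaf or has exactly two children, and every non-leaf node has capacity `0`. -/
def DPSetting [Fintype VS] [DecidableEq VS] (I : VNEP VS VR τ) (T : RTree VS) : Prop :=
  I.ES = T.edges ∧
  (∀ v : VS, childrenOf T v = ∅ ∨ ∃ a b : VS, a ≠ b ∧ childrenOf T v = {a, b}) ∧
  (∀ v : VS, childrenOf T v ≠ ∅ → I.dSv v = 0)

/-- The substrate edge `eS` lies on the directed (upward) path in `T_v` from `w` to `v`. -/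
def onUp (T : RTree VS) (v w : VS) (eS : VS × VS) : Prop :=
  ∃ i : ℕ, T.parent^[i] w = eS.1 ∧ T.parent eS.1 = eS.2 ∧ ∀ j ≤ i, T.parent^[j] w ≠ v

/-- The substrate edge `eS` lies on the directed (downward) path in `T_v` from `v` to `w`. -/
def onDown (T : RTree VS) (v w : VS) (eS : VS × VS) : Prop := onUp T v w (eS.2, eS.1)

/-- The edge set of the directed path in `T_v` from `w` up to `v`. -/
noncomputable def upEdges [Fintype VS] (T : RTree VS) (v w : VS) : Finset (VS × VS) :=
  Finset.univ.filter fun eS => onUp T v w eS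

/-- The edge set of the directed path in `T_v` from `v` down to `w`. -/
noncomputable def downEdges [Fintype VS] (T : RTree VS) (v w : VS) : Finset (VS × VS) :=
  Finset.univ.filter fun eS => onDown T v w eS

/-- `E^v_{eS}(X)`: the request edges of `cut(X)` whose source is mapped so that `eS` lies on
the upward path to `v`, together with the request edges of `cut⁻(X)` whose target is mapped
so that `eS` lies on the downward path from `v`. -/
noncomputable def EvSet (I : VNEP VS VR τ) (T : RTree VS) (v : VS) (X : Finset VR)
    (mV : VR → VS) (eS : VS × VS) : Finset (VR × VR) :=
  (cutP I X).filter (fun e => onUp T v (mV e.1) eS) ∪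
    (cutN I X).filter (fun e => onDown T v (mV e.2) eS)

/-- A desirable mapping of `G_R[X]` into `T_v`: a feasible mapping of the induced subrequest
into the subtree `T_v` such that every edge of `T_v` moreover has enough remaining capacity
for the cut edges routed through it towards/from `v`. -/
def Desirable (I : VNEP VS VR τ) (T : RTree VS) (v : VS) (X : Finset VR)
    (M : Mapping VS VR) : Prop :=
  (∀ w ∈ X, T.InSubtree v (M.mV w)) ∧
  (∀ e ∈ ERin I X, IsDiPath (fun a b => (a, b) ∈ I.ES) (M.mV e.1) (M.mV e.2) (M.mE e) ∧
    ∀ x ∈ M.mE e, T.InSubtree v x) ∧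
  (∀ s : VS, ∀ t : Fin τ,
    ((∑ w ∈ X.filter (fun w => M.mV w = s), I.dRv w t : ℝ≥0) : ℝ≥0∞) ≤ I.dSv s t) ∧
  (∀ eS ∈ I.ES, T.InSubtree v eS.1 → T.InSubtree v eS.2 → ∀ t : Fin τ,
    (((∑ eR ∈ (ERin I X).filter (fun eR => eS ∈ pathEdges (M.mE eR)), I.dRe eR t) +
        (∑ e ∈ EvSet I T v X M.mV eS, I.dRe e t) : ℝ≥0) : ℝ≥0∞) ≤ I.dSe eS t)

/-- The induced cost of a mapping of `G_R[X]` into `T_v`: the cost of mapping the nodes of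
`X` and the edges of `G_R[X]`, plus for each edge of `cut(X)` (resp. `cut⁻(X)`) the cost of
the path from the image of its source up to `v` (resp. from `v` down to the image of its
target). -/
noncomputable def inducedCost [Fintype VS] [DecidableEq VS] (I : VNEP VS VR τ)
    (T : RTree VS) (v : VS) (X : Finset VR) (M : Mapping VS VR) : ℝ≥0 :=
  (∑ w ∈ X, ∑ t, I.dRv w t * I.cSv (M.mV w) t) +
  (∑ e ∈ ERin I X, ∑ e' ∈ (pathEdges (M.mE e)).toFinset, ∑ t, I.dRe e t * I.cSe e' t) +
  (∑ e ∈ cutP I X, ∑ e' ∈ upEdges T v (M.mV e.1), ∑ t, I.dRe e t * I.cSe e' t) +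
  (∑ e ∈ cutN I X, ∑ e' ∈ downEdges T v (M.mV e.2), ∑ t, I.dRe e t * I.cSe e' t)

end DPDefs

section Combine

variable {VS VR : Type*}

/-- The number of steps needed to reach `v` from `w` by iterating the parent function
(`0` if `v` is not an ancestor of `w`). -/
noncomputable def stepsTo (T : RTree VS) (v w : VS) : ℕ :=
  if h : ∃ n : ℕ, T.parent^[n] w = v then Nat.find h else 0

/-- The vertex list of the directed path in `T_v` from `w` up to `v`. -/
noncomputable def upList (T : RTree VS) (v w : VS) : List VS :=
  (List.range (stepsTo T v w + 1)).map fun i => T.parent^[i] w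

/-- The vertex list of the directed path in `T_v` from `v` down to `w`. -/
noncomputable def downList (T : RTree VS) (v w : VS) : List VS := (upList T v w).reverse

/-- The combination of a mapping `Ma` of `G_R[A]` into `T_a` and a mapping `Mb` of `G_R[B]`
into `T_b`, for the two children `a`, `b` of `v`: nodes and edges inside `A` (resp. `B`) are
mapped as by `Ma` (resp. `Mb`), and each request edge between `A` and `B` is mapped to the
unique directed path in `T_v` between the images of its endpoints, which passes through
`v`. -/
noncomputable def combineMapping (T : RTree VS) (v : VS) (A B : Finset VR)
    (Ma Mb : Mapping VS VR) : Mapping VS VR where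
  mV := fun w => if w ∈ A then Ma.mV w else Mb.mV w
  mE := fun e =>
    if e.1 ∈ A ∧ e.2 ∈ A then Ma.mE e
    else if e.1 ∈ B ∧ e.2 ∈ B then Mb.mE e
    else if e.1 ∈ A ∧ e.2 ∈ B then
      upList T v (Ma.mV e.1) ++ (downList T v (Mb.mV e.2)).tail
    else if e.1 ∈ B ∧ e.2 ∈ A then
      upList T v (Mb.mV e.1) ++ (downList T v (Ma.mV e.2)).tail
    else []

end Combine

/-!
Seen from `v`, both mappings become mappings into `T_v`: a mapping into the subtree of a child
additionally occupies the two edges between that child and `v`, and it does so exactly with its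
cut edges, which is what the four capacity hypotheses pay for. A request edge between `A` and `B`
leaves one of the two sets and enters the other, and its path through `v` is made of precisely the
two pieces it already occupied as a cut edge of `A` and of `B`. Hence cost and load, both sums over
the occupied pairs of a request edge and a substrate edge, add up under the union, and the load of
a substrate edge comes from only one of the two branches at `v`.
-/

section PathEdges

variable {α : Type*}

theorem pathEdges_cons_cons (x y : α) (l : List α) :
    pathEdges (x :: y :: l) = (x, y) :: pathEdges (y :: l) :=
  rfl

theorem pathEdges_append_cons (l r : List α) (x : α) :
    pathEdges (l ++ x :: r) = pathEdges (l ++ [x]) ++ pathEdges (x :: r) := by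
  induction l with
  | nil => rfl
  | cons y l ih =>
    cases l with
    | nil => rfl
    | cons z l => simpa only [List.cons_append, pathEdges_cons_cons, List.cons.injEq, true_and]

theorem pathEdges_reverse (l : List α) :
    pathEdges l.reverse = ((pathEdges l).map Prod.swap).reverse := by
  induction l with
  | nil => rfl
  | cons x l ih =>
    cases l with
    | nil => rfl
    | cons y l =>
      rw [pathEdges_cons_cons, List.map_cons, List.reverse_cons (a := Prod.swap _), ← ih,
        List.reverse_cons, List.reverse_cons, List.append_assoc, List.singleton_append,
        pathEdges_append_cons]
      rfl

theorem mem_pathEdges_reverse (l : List α) (e : α × α) :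
    e ∈ pathEdges l.reverse ↔ e.swap ∈ pathEdges l := by
  rw [pathEdges_reverse, List.mem_reverse, List.mem_map_swap, Prod.swap]

theorem mem_of_mem_pathEdges {l : List α} {e : α × α} (he : e ∈ pathEdges l) :
    e.1 ∈ l ∧ e.2 ∈ l :=
  have h := List.of_mem_zip he
  ⟨h.1, List.mem_of_mem_tail h.2⟩

end PathEdges

namespace RTree

variable {V : Type*} {T : RTree V} {a b v w x y : V} {e : V × V}

theorem InSubtree.refl (T : RTree V) (v : V) : T.InSubtree v v :=
  ⟨0, rfl⟩

theorem InSubtree.trans (hvw : T.InSubtree v w) (hwx : T.InSubtree w x) : T.InSubtree v x := by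
  obtain ⟨m, rfl⟩ := hvw
  obtain ⟨n, rfl⟩ := hwx
  exact ⟨m + n, Function.iterate_add_apply ..⟩

theorem inSubtree_parent_self (T : RTree V) (w : V) : T.InSubtree (T.parent w) w :=
  ⟨1, rfl⟩

theorem InSubtree.of_parent (h : T.InSubtree v (T.parent w)) : T.InSubtree v w :=
  h.trans (T.inSubtree_parent_self w)

theorem InSubtree.parent_of_ne (h : T.InSubtree v w) (hne : w ≠ v) :
    T.InSubtree v (T.parent w) := by
  obtain ⟨_ | n, hn⟩ := h
  · exact absurd hn hne
  · exact ⟨n, hn⟩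

theorem InSubtree.induction {P : ∀ w, T.InSubtree v w → Prop} (self : P v (.refl T v))
    (step : ∀ w (_ : w ≠ v) (h : T.InSubtree v (T.parent w)), P (T.parent w) h → P w h.of_parent)
    (h : T.InSubtree v w) : P w h := by
  obtain ⟨n, hn⟩ := h
  induction n generalizing w with
  | zero =>
    obtain rfl : w = v := hn
    exact self
  | succ n ih =>
    by_cases hw : w = v
    · subst hw
      exact self
    · exact step w hw ⟨n, hn⟩ (ih hn)

theorem eq_root_of_isPeriodicPt {n : ℕ} (hn : 0 < n)
    (h : Function.IsPeriodicPt T.parent n w) : w = T.root := by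
  obtain ⟨m, hm⟩ := T.reaches_root w
  obtain ⟨k, hk⟩ := Nat.exists_eq_add_of_le' (Nat.le_mul_of_pos_right m hn)
  calc
    w = T.parent^[m * n] w := (h.const_mul m).eq.symm
    _ = T.parent^[k] T.root := by rw [hk, Function.iterate_add_apply, hm]
    _ = T.root := Function.iterate_fixed T.parent_root k

theorem InSubtree.antisymm (hvw : T.InSubtree v w) (hwv : T.InSubtree w v) : v = w := by
  obtain ⟨m, rfl⟩ := hvw
  obtain ⟨n, hn⟩ := hwv
  rcases Nat.eq_zero_or_pos m with rfl | hm
  · rfl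
  · have hw : w = T.root :=
      eq_root_of_isPeriodicPt (n := n + m) (by lia) (by
        rwa [Function.IsPeriodicPt, Function.IsFixedPt, Function.iterate_add_apply])
    rw [hw, Function.iterate_fixed T.parent_root m]

theorem InSubtree.total (ha : T.InSubtree a w) (hb : T.InSubtree b w) :
    T.InSubtree a b ∨ T.InSubtree b a := by
  obtain ⟨m, rfl⟩ := ha
  obtain ⟨n, rfl⟩ := hb
  rcases le_total m n with h | h <;> obtain ⟨k, rfl⟩ := Nat.exists_eq_add_of_le' h
  · exact .inr ⟨k, (Function.iterate_add_apply ..).symm⟩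
  · exact .inl ⟨k, (Function.iterate_add_apply ..).symm⟩

theorem IsChild.inSubtree (h : T.IsChild a v) : T.InSubtree v a :=
  ⟨1, h.2⟩

theorem IsChild.not_inSubtree (h : T.IsChild a v) : ¬ T.InSubtree a v := fun hav =>
  h.1 (hav.antisymm h.inSubtree)

theorem IsChild.asymm (h : T.IsChild a v) : ¬ T.IsChild v a := fun h' =>
  h.not_inSubtree h'.inSubtree

theorem IsChild.not_inSubtree_of_ne (ha : T.IsChild a v) (hb : T.IsChild b v) (hab : a ≠ b)
    (hw : T.InSubtree a w) : ¬ T.InSubtree b w := fun hw' => by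
  rcases hw.total hw' with h | h
  · exact ha.not_inSubtree (hb.2 ▸ h.parent_of_ne hab.symm)
  · exact hb.not_inSubtree (ha.2 ▸ h.parent_of_ne hab)

theorem isChild_parent (hw : w ≠ v) (h : T.InSubtree v (T.parent w)) :
    T.IsChild w (T.parent w) := by
  refine ⟨fun hfix => hw ?_, rfl⟩
  obtain ⟨n, hn⟩ := h.of_parent
  rw [← hn, Function.iterate_fixed hfix.symm]

theorem IsChild.mem_edges [Fintype V] [DecidableEq V] (h : T.IsChild x y) :
    (x, y) ∈ T.edges ∧ (y, x) ∈ T.edges := by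
  simp only [edges, Finset.mem_filter, Finset.mem_univ, true_and]
  exact ⟨⟨h.1, .inl h.2⟩, ⟨h.1.symm, .inr h.2⟩⟩

theorem mem_childrenOf [Fintype V] : w ∈ childrenOf T v ↔ T.IsChild w v := by
  rw [childrenOf, Finset.mem_filter_univ]

/-- The branch of the child `a` at its parent `v`: the substrate edge `e` lies in `T_a` or joins
`a` and `v`. -/
def OnBranch (T : RTree V) (a v : V) (e : V × V) : Prop :=
  (T.InSubtree a e.1 ∧ T.InSubtree a e.2) ∨ e = (a, v) ∨ e = (v, a)

theorem OnBranch.not_onBranch_of_ne (ha : T.IsChild a v) (hb : T.IsChild b v) (hab : a ≠ b)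
    (h : T.OnBranch a v e) : ¬ T.OnBranch b v e := by
  rcases h with h | rfl | rfl
  · rintro (h' | rfl | rfl)
    · exact ha.not_inSubtree_of_ne hb hab h.1 h'.1
    · exact ha.not_inSubtree h.2
    · exact ha.not_inSubtree h.1
  · rintro (h' | h' | h')
    · exact hb.not_inSubtree h'.2
    · exact hab (Prod.mk.inj h').1
    · exact ha.1 (Prod.mk.inj h').1
  · rintro (h' | h' | h')
    · exact hb.not_inSubtree h'.1
    · exact ha.1 (Prod.mk.inj h').2
    · exact hab (Prod.mk.inj h').2

end RTree

section UpwardPaths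

variable {V : Type*} {T : RTree V} {a v w x : V} {e : V × V}

theorem stepsTo_self (T : RTree V) (v : V) : stepsTo T v v = 0 := by
  have h : ∃ n, T.parent^[n] v = v := ⟨0, rfl⟩
  rw [stepsTo, dif_pos h, Nat.find_eq_zero, Function.iterate_zero_apply]

theorem stepsTo_of_ne (hw : w ≠ v) (h : T.InSubtree v (T.parent w)) :
    stepsTo T v w = stepsTo T v (T.parent w) + 1 := by
  have hparent : ∃ n, T.parent^[n] (T.parent w) = v := h
  have hself : ∃ n, T.parent^[n] w = v := h.of_parent
  rw [stepsTo, stepsTo, dif_pos hself, dif_pos hparent]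
  exact Nat.find_comp_succ hself hparent hw

theorem upList_self (T : RTree V) (v : V) : upList T v v = [v] := by
  rw [upList, stepsTo_self]
  rfl

theorem upList_of_ne (hw : w ≠ v) (h : T.InSubtree v (T.parent w)) :
    upList T v w = w :: upList T v (T.parent w) := by
  rw [upList, stepsTo_of_ne hw h, List.range_succ_eq_map, List.map_cons, List.map_map]
  rfl

theorem head?_upList (T : RTree V) (v w : V) : (upList T v w).head? = some w := by
  rw [upList, List.range_succ_eq_map]
  rfl

theorem getLast?_upList (h : T.InSubtree v w) : (upList T v w).getLast? = some v := by
  induction h using RTree.InSubtree.induction with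
  | self => rw [upList_self, List.getLast?_singleton]
  | step w hw h ih => rw [upList_of_ne hw h, List.getLast?_cons, ih, Option.getD_some]

theorem inSubtree_of_mem_upList (h : T.InSubtree v w) (hx : x ∈ upList T v w) :
    T.InSubtree v x ∧ T.InSubtree x w := by
  induction h using RTree.InSubtree.induction with
  | self =>
    obtain rfl : x = v := by rwa [upList_self, List.mem_singleton] at hx
    exact ⟨.refl T x, .refl T x⟩
  | step w hw h ih =>
    rw [upList_of_ne hw h, List.mem_cons] at hx
    rcases hx with rfl | hx
    · exact ⟨h.of_parent, .refl T x⟩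
    · exact ⟨(ih hx).1, (ih hx).2.of_parent⟩

theorem isChain_upList (h : T.InSubtree v w) : List.IsChain T.IsChild (upList T v w) := by
  induction h using RTree.InSubtree.induction with
  | self => simp only [upList_self, List.isChain_singleton]
  | step w hw h ih =>
    rw [upList_of_ne hw h, List.isChain_cons, head?_upList]
    exact ⟨fun _ hp => Option.some.inj hp ▸ RTree.isChild_parent hw h, ih⟩

theorem nodup_upList (h : T.InSubtree v w) : (upList T v w).Nodup := by
  induction h using RTree.InSubtree.induction with
  | self => simp only [upList_self, List.nodup_singleton]
  | step w hw h ih =>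
    rw [upList_of_ne hw h, List.nodup_cons]
    exact ⟨fun hmem => (RTree.isChild_parent hw h).not_inSubtree
      (inSubtree_of_mem_upList h hmem).2, ih⟩

theorem upList_eq_append_of_isChild (ha : T.IsChild a v) (h : T.InSubtree a w) :
    upList T v w = upList T a w ++ [v] := by
  induction h using RTree.InSubtree.induction with
  | self =>
    have hv : T.InSubtree v (T.parent a) := ha.2 ▸ .refl T v
    rw [upList_of_ne ha.1 hv, ha.2, upList_self, upList_self, List.singleton_append]
  | step w hw h ih =>
    have hwv : w ≠ v := by
      rintro rfl
      exact ha.not_inSubtree h.of_parent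
    rw [upList_of_ne hw h, upList_of_ne hwv (ha.inSubtree.trans h), ih, List.cons_append]

theorem not_onUp_self (T : RTree V) (v : V) (e : V × V) : ¬ onUp T v v e :=
  fun ⟨i, _, _, havoid⟩ => havoid 0 i.zero_le rfl

theorem onUp_of_ne (hw : w ≠ v) :
    onUp T v w e ↔ e = (w, T.parent w) ∨ onUp T v (T.parent w) e := by
  constructor
  · rintro ⟨_ | i, hsource, htarget, havoid⟩
    · exact .inl (Prod.ext hsource.symm (htarget ▸ congrArg T.parent hsource.symm))
    · exact .inr ⟨i, hsource, htarget, fun j hj => havoid (j + 1) (by lia)⟩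
  · rintro (rfl | ⟨i, hsource, htarget, havoid⟩)
    · refine ⟨0, rfl, rfl, fun j hj => ?_⟩
      rwa [Nat.le_zero.1 hj]
    · refine ⟨i + 1, hsource, htarget, fun j hj => ?_⟩
      cases j with
      | zero => exact hw
      | succ j => exact havoid j (by lia)

theorem onUp_iff_mem_pathEdges (h : T.InSubtree v w) :
    onUp T v w e ↔ e ∈ pathEdges (upList T v w) := by
  induction h using RTree.InSubtree.induction with
  | self => simp [upList_self, not_onUp_self, pathEdges]
  | step w hw h ih =>
    obtain ⟨l, hl⟩ := List.head?_eq_some_iff.1 (head?_upList T v (T.parent w))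
    rw [onUp_of_ne hw, ih, upList_of_ne hw h, hl, pathEdges_cons_cons, List.mem_cons]

theorem onUp.isChild (h : T.InSubtree v w) (he : onUp T v w e) : T.IsChild e.1 e.2 := by
  induction h using RTree.InSubtree.induction with
  | self => exact absurd he (not_onUp_self T v e)
  | step w hw h ih =>
    rcases (onUp_of_ne hw).1 he with rfl | he
    · exact RTree.isChild_parent hw h
    · exact ih he

theorem onUp.inSubtree (h : T.InSubtree v w) (he : onUp T v w e) :
    T.InSubtree v e.1 ∧ T.InSubtree v e.2 :=
  have hmem := mem_of_mem_pathEdges ((onUp_iff_mem_pathEdges h).1 he)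
  ⟨(inSubtree_of_mem_upList h hmem.1).1, (inSubtree_of_mem_upList h hmem.2).1⟩

theorem onUp_iff_of_isChild (ha : T.IsChild a v) (h : T.InSubtree a w) :
    onUp T v w e ↔ e = (a, v) ∨ onUp T a w e := by
  obtain ⟨l, hl⟩ := List.getLast?_eq_some_iff.1 (getLast?_upList h)
  rw [onUp_iff_mem_pathEdges (ha.inSubtree.trans h), onUp_iff_mem_pathEdges h,
    upList_eq_append_of_isChild ha h, hl, List.append_assoc, List.singleton_append,
    pathEdges_append_cons, List.mem_append, or_comm]
  simp [pathEdges]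

end UpwardPaths

section PathVia

variable {V : Type*} {T : RTree V} {a b v x y : V} {e : V × V}

/-- The vertex list of the walk that climbs from `x` to `v` and then descends to `y`. When `x`
and `y` lie below different children of `v`, this is the path from `x` to `y` in the tree. -/
noncomputable def pathVia (T : RTree V) (v x y : V) : List V :=
  upList T v x ++ (downList T v y).tail

theorem exists_pathVia_eq (hx : T.InSubtree v x) (hy : T.InSubtree v y) :
    ∃ l r, upList T v x = l ++ [v] ∧ downList T v y = v :: r ∧ pathVia T v x y = l ++ v :: r := by
  obtain ⟨l, hl⟩ := List.getLast?_eq_some_iff.1 (getLast?_upList hx)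
  obtain ⟨r, hr⟩ : ∃ r, downList T v y = v :: r := by
    rw [← List.head?_eq_some_iff, downList, List.head?_reverse, getLast?_upList hy]
  exact ⟨l, r, hl, hr, by rw [pathVia, hl, hr, List.tail_cons, ← List.append_cons]⟩

theorem mem_pathEdges_pathVia (hx : T.InSubtree v x) (hy : T.InSubtree v y) :
    e ∈ pathEdges (pathVia T v x y) ↔ onUp T v x e ∨ onDown T v y e := by
  obtain ⟨l, r, hl, hr, hlr⟩ := exists_pathVia_eq hx hy
  rw [hlr, pathEdges_append_cons, ← hl, ← hr, List.mem_append, downList, mem_pathEdges_reverse,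
    ← onUp_iff_mem_pathEdges hx, ← onUp_iff_mem_pathEdges hy]
  rfl

theorem nodup_pathVia (ha : T.IsChild a v) (hb : T.IsChild b v) (hab : a ≠ b)
    (hx : T.InSubtree a x) (hy : T.InSubtree b y) : (pathVia T v x y).Nodup := by
  have hpath : pathVia T v x y = upList T v x ++ (upList T b y).reverse := by
    rw [pathVia, downList, upList_eq_append_of_isChild hb hy, List.reverse_concat, List.tail_cons]
  rw [hpath, List.nodup_append', List.nodup_reverse]
  refine ⟨nodup_upList (ha.inSubtree.trans hx), nodup_upList hy, fun z hzx hzy => ?_⟩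
  have hbz := (inSubtree_of_mem_upList hy (List.mem_reverse.1 hzy)).1
  rw [upList_eq_append_of_isChild ha hx, List.mem_append, List.mem_singleton] at hzx
  rcases hzx with hz | rfl
  · exact ha.not_inSubtree_of_ne hb hab (inSubtree_of_mem_upList hx hz).1 hbz
  · exact hb.not_inSubtree hbz

theorem isDiPath_pathVia {E : V → V → Prop} (hE : ∀ p q, T.IsChild p q → E p q ∧ E q p)
    (ha : T.IsChild a v) (hb : T.IsChild b v) (hab : a ≠ b)
    (hx : T.InSubtree a x) (hy : T.InSubtree b y) : IsDiPath E x y (pathVia T v x y) := by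
  have hxv := ha.inSubtree.trans hx
  have hyv := hb.inSubtree.trans hy
  obtain ⟨l, r, hl, hr, hlr⟩ := exists_pathVia_eq hxv hyv
  refine ⟨?_, ?_, ?_, nodup_pathVia ha hb hab hx hy⟩
  · rw [pathVia, List.head?_append, head?_upList, Option.some_or]
  · rw [hlr, List.getLast?_append_cons, ← hr, downList, List.getLast?_reverse, head?_upList]
  · have hup : List.IsChain E (upList T v x) := (isChain_upList hxv).imp fun p q h => (hE p q h).1
    have hdown : List.IsChain E (downList T v y) :=
      List.isChain_reverse.2 ((isChain_upList hyv).imp fun p q h => (hE p q h).2)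
    rw [hlr]
    exact List.isChain_split.2 ⟨hl ▸ hup, hr ▸ hdown⟩

theorem inSubtree_of_mem_pathVia {z : V} (hx : T.InSubtree v x) (hy : T.InSubtree v y)
    (hz : z ∈ pathVia T v x y) : T.InSubtree v z := by
  rcases List.mem_append.1 hz with hz | hz
  · exact (inSubtree_of_mem_upList hx hz).1
  · exact (inSubtree_of_mem_upList hy (List.mem_reverse.1 (List.mem_of_mem_tail hz))).1

end PathVia

section EdgeSums

variable {V R : Type*} [Fintype V] [AddCommMonoid R] {T : RTree V} {a v w x y : V} {e : V × V}

theorem mem_upEdges : e ∈ upEdges T v w ↔ onUp T v w e := by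
  rw [upEdges, Finset.mem_filter_univ]

theorem mem_downEdges : e ∈ downEdges T v w ↔ onDown T v w e := by
  rw [downEdges, Finset.mem_filter_univ]

theorem sum_upEdges_of_isChild (ha : T.IsChild a v) (h : T.InSubtree a w) (f : V × V → R) :
    ∑ e ∈ upEdges T v w, f e = f (a, v) + ∑ e ∈ upEdges T a w, f e := by
  have hnotMem : (a, v) ∉ upEdges T a w := fun hmem =>
    ha.not_inSubtree ((mem_upEdges.1 hmem).inSubtree h).2
  rw [← Finset.sum_insert hnotMem]
  refine Finset.sum_congr (Finset.ext fun e => ?_) fun _ _ => rfl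
  rw [Finset.mem_insert, mem_upEdges, mem_upEdges, onUp_iff_of_isChild ha h]

theorem sum_downEdges_of_isChild (ha : T.IsChild a v) (h : T.InSubtree a w) (f : V × V → R) :
    ∑ e ∈ downEdges T v w, f e = f (v, a) + ∑ e ∈ downEdges T a w, f e := by
  have hnotMem : (v, a) ∉ downEdges T a w := fun hmem =>
    ha.not_inSubtree (onUp.inSubtree h (mem_downEdges.1 hmem)).2
  rw [← Finset.sum_insert hnotMem]
  refine Finset.sum_congr (Finset.ext fun e => ?_) fun _ _ => rfl
  rw [Finset.mem_insert, mem_downEdges, mem_downEdges, onDown, onUp_iff_of_isChild ha h, onDown,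
    Prod.ext_iff, Prod.ext_iff, and_comm]

theorem sum_pathEdges_pathVia [DecidableEq V] (hx : T.InSubtree v x) (hy : T.InSubtree v y)
    (f : V × V → R) :
    ∑ e ∈ (pathEdges (pathVia T v x y)).toFinset, f e =
      ∑ e ∈ upEdges T v x, f e + ∑ e ∈ downEdges T v y, f e := by
  have hdisj : Disjoint (upEdges T v x) (downEdges T v y) :=
    Finset.disjoint_left.2 fun e hup hdown =>
      ((mem_upEdges.1 hup).isChild hx).asymm (onUp.isChild hy (mem_downEdges.1 hdown))
  rw [← Finset.sum_union hdisj]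
  refine Finset.sum_congr (Finset.ext fun e => ?_) fun _ _ => rfl
  rw [List.mem_toFinset, Finset.mem_union, mem_upEdges, mem_downEdges,
    mem_pathEdges_pathVia hx hy]

end EdgeSums

section CutSums

variable {VS VR R : Type*} {τ : ℕ} {I : VNEP VS VR τ} {A B : Finset VR} {e : VR × VR}

/-- The request edges from `A` to `B`. -/
noncomputable def edgesBetween (I : VNEP VS VR τ) (A B : Finset VR) : Finset (VR × VR) :=
  I.ER.filter fun e => e.1 ∈ A ∧ e.2 ∈ B

theorem fst_mem_of_mem_cutP (he : e ∈ cutP I A) : e.1 ∈ A :=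
  (Finset.mem_filter.1 he).2.1

theorem snd_mem_of_mem_cutN (he : e ∈ cutN I A) : e.2 ∈ A :=
  (Finset.mem_filter.1 he).2.2

variable [DecidableEq VR]

theorem mem_ERin_union (he : e ∈ ERin I (A ∪ B)) :
    e ∈ ERin I A ∨ e ∈ ERin I B ∨ e ∈ edgesBetween I A B ∨ e ∈ edgesBetween I B A := by
  simp only [ERin, edgesBetween, Finset.mem_filter, Finset.mem_union] at he ⊢
  tauto

variable [AddCommMonoid R]

theorem sum_ERin_union (hAB : Disjoint A B) (g : VR × VR → R) :
    ∑ e ∈ ERin I (A ∪ B), g e =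
      ∑ e ∈ ERin I A, g e + ∑ e ∈ ERin I B, g e +
        (∑ e ∈ edgesBetween I A B, g e + ∑ e ∈ edgesBetween I B A, g e) := by
  have hB {w : VR} (hw : w ∈ A) : w ∉ B := Finset.disjoint_left.1 hAB hw
  simp only [ERin, edgesBetween, Finset.sum_filter, ← Finset.sum_add_distrib, Finset.mem_union]
  refine Finset.sum_congr rfl fun e _ => ?_
  by_cases h₁ : e.1 ∈ A <;> by_cases h₂ : e.2 ∈ A <;> simp [h₁, h₂, hB]

theorem sum_cutP_add_sum_cutP (hAB : Disjoint A B) (g : VR × VR → R) :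
    ∑ e ∈ cutP I A, g e + ∑ e ∈ cutP I B, g e =
      ∑ e ∈ cutP I (A ∪ B), g e +
        (∑ e ∈ edgesBetween I A B, g e + ∑ e ∈ edgesBetween I B A, g e) := by
  have hB {w : VR} (hw : w ∈ A) : w ∉ B := Finset.disjoint_left.1 hAB hw
  simp only [cutP, edgesBetween, Finset.sum_filter, ← Finset.sum_add_distrib, Finset.mem_union]
  refine Finset.sum_congr rfl fun e _ => ?_
  by_cases h₁ : e.1 ∈ A <;> by_cases h₂ : e.2 ∈ A <;> by_cases h₃ : e.2 ∈ B <;>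
    simp_all

theorem sum_cutN_add_sum_cutN (hAB : Disjoint A B) (g : VR × VR → R) :
    ∑ e ∈ cutN I A, g e + ∑ e ∈ cutN I B, g e =
      ∑ e ∈ cutN I (A ∪ B), g e +
        (∑ e ∈ edgesBetween I A B, g e + ∑ e ∈ edgesBetween I B A, g e) := by
  have hB {w : VR} (hw : w ∈ A) : w ∉ B := Finset.disjoint_left.1 hAB hw
  simp only [cutN, edgesBetween, Finset.sum_filter, ← Finset.sum_add_distrib, Finset.mem_union]
  refine Finset.sum_congr rfl fun e _ => ?_
  by_cases h₁ : e.1 ∈ A <;> by_cases h₂ : e.2 ∈ A <;> by_cases h₃ : e.1 ∈ B <;>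
    simp_all

end CutSums

section RoutingSums

variable {VS VR R : Type*} {τ : ℕ} [Fintype VS] [DecidableEq VS] [AddCommMonoid R]
  {I : VNEP VS VR τ} {T : RTree VS} {a v : VS} {A B X : Finset VR} {M : Mapping VS VR}

/-- The sum of `f e e'` over all request edges `e` touching `X` and all edges `e'` of `T_v` that
`e` occupies: the edges of its path if `e` lies inside `X`, and the edges between `v` and the
image of its endpoint in `X` if `e` is a cut edge. The routing part of the induced cost and the
load of a substrate edge are both of this form. -/
noncomputable def routingSum (I : VNEP VS VR τ) (T : RTree VS) (v : VS) (X : Finset VR)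
    (M : Mapping VS VR) (f : VR × VR → VS × VS → R) : R :=
  ∑ e ∈ ERin I X, ∑ e' ∈ (pathEdges (M.mE e)).toFinset, f e e' +
    ∑ e ∈ cutP I X, ∑ e' ∈ upEdges T v (M.mV e.1), f e e' +
    ∑ e ∈ cutN I X, ∑ e' ∈ downEdges T v (M.mV e.2), f e e'

theorem routingSum_of_isChild (ha : T.IsChild a v) (hX : ∀ w ∈ X, T.InSubtree a (M.mV w))
    (f : VR × VR → VS × VS → R) :
    routingSum I T v X M f = routingSum I T a X M f +
      ∑ e ∈ cutP I X, f e (a, v) + ∑ e ∈ cutN I X, f e (v, a) := by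
  have hup : ∑ e ∈ cutP I X, ∑ e' ∈ upEdges T v (M.mV e.1), f e e' =
      ∑ e ∈ cutP I X, f e (a, v) + ∑ e ∈ cutP I X, ∑ e' ∈ upEdges T a (M.mV e.1), f e e' := by
    rw [← Finset.sum_add_distrib]
    exact Finset.sum_congr rfl fun e he =>
      sum_upEdges_of_isChild ha (hX _ (fst_mem_of_mem_cutP he)) (f e)
  have hdown : ∑ e ∈ cutN I X, ∑ e' ∈ downEdges T v (M.mV e.2), f e e' =
      ∑ e ∈ cutN I X, f e (v, a) + ∑ e ∈ cutN I X, ∑ e' ∈ downEdges T a (M.mV e.2), f e e' := by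
    rw [← Finset.sum_add_distrib]
    exact Finset.sum_congr rfl fun e he =>
      sum_downEdges_of_isChild ha (hX _ (snd_mem_of_mem_cutN he)) (f e)
  rw [routingSum, routingSum, hup, hdown]
  abel

theorem routingSum_eq_zero (hV : ∀ w ∈ X, T.InSubtree v (M.mV w))
    (hE : ∀ e ∈ ERin I X, ∀ x ∈ M.mE e, T.InSubtree v x) {f : VR × VR → VS × VS → R}
    (hf : ∀ e e', T.InSubtree v e'.1 → T.InSubtree v e'.2 → f e e' = 0) :
    routingSum I T v X M f = 0 := by
  have hpath : ∑ e ∈ ERin I X, ∑ e' ∈ (pathEdges (M.mE e)).toFinset, f e e' = 0 :=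
    Finset.sum_eq_zero fun e he => Finset.sum_eq_zero fun e' he' =>
      have hmem := mem_of_mem_pathEdges (List.mem_toFinset.1 he')
      hf e e' (hE e he _ hmem.1) (hE e he _ hmem.2)
  have hup : ∑ e ∈ cutP I X, ∑ e' ∈ upEdges T v (M.mV e.1), f e e' = 0 :=
    Finset.sum_eq_zero fun e he => Finset.sum_eq_zero fun e' he' =>
      have hsub := (mem_upEdges.1 he').inSubtree (hV _ (fst_mem_of_mem_cutP he))
      hf e e' hsub.1 hsub.2
  have hdown : ∑ e ∈ cutN I X, ∑ e' ∈ downEdges T v (M.mV e.2), f e e' = 0 :=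
    Finset.sum_eq_zero fun e he => Finset.sum_eq_zero fun e' he' =>
      have hsub := onUp.inSubtree (hV _ (snd_mem_of_mem_cutN he)) (mem_downEdges.1 he')
      hf e e' hsub.2 hsub.1
  rw [routingSum, hpath, hup, hdown, add_zero, add_zero]

/-- Every request edge from `A` to `B` is mapped to the walk through `v` between the images of its
endpoints. -/
def Mapping.RoutesVia (I : VNEP VS VR τ) (T : RTree VS) (v : VS) (A B : Finset VR)
    (M : Mapping VS VR) : Prop :=
  ∀ e ∈ edgesBetween I A B, M.mE e = pathVia T v (M.mV e.1) (M.mV e.2)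

theorem Mapping.RoutesVia.sum_pathEdges (hM : M.RoutesVia I T v A B)
    (hA : ∀ w ∈ A, T.InSubtree v (M.mV w)) (hB : ∀ w ∈ B, T.InSubtree v (M.mV w))
    (f : VR × VR → VS × VS → R) :
    ∑ e ∈ edgesBetween I A B, ∑ e' ∈ (pathEdges (M.mE e)).toFinset, f e e' =
      ∑ e ∈ edgesBetween I A B, ∑ e' ∈ upEdges T v (M.mV e.1), f e e' +
        ∑ e ∈ edgesBetween I A B, ∑ e' ∈ downEdges T v (M.mV e.2), f e e' := by
  rw [← Finset.sum_add_distrib]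
  refine Finset.sum_congr rfl fun e he => ?_
  obtain ⟨-, he₁, he₂⟩ := Finset.mem_filter.1 he
  rw [hM e he, sum_pathEdges_pathVia (hA _ he₁) (hB _ he₂)]

theorem routingSum_union [DecidableEq VR] (hAB : Disjoint A B)
    (hA : ∀ w ∈ A, T.InSubtree v (M.mV w)) (hB : ∀ w ∈ B, T.InSubtree v (M.mV w))
    (hMAB : M.RoutesVia I T v A B) (hMBA : M.RoutesVia I T v B A) (f : VR × VR → VS × VS → R) :
    routingSum I T v (A ∪ B) M f = routingSum I T v A M f + routingSum I T v B M f := by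
  let path e := ∑ e' ∈ (pathEdges (M.mE e)).toFinset, f e e'
  let up e := ∑ e' ∈ upEdges T v (M.mV e.1), f e e'
  let down e := ∑ e' ∈ downEdges T v (M.mV e.2), f e e'
  calc
    routingSum I T v (A ∪ B) M f =
        ∑ e ∈ ERin I A, path e + ∑ e ∈ ERin I B, path e +
          (∑ e ∈ cutP I (A ∪ B), up e +
            (∑ e ∈ edgesBetween I A B, up e + ∑ e ∈ edgesBetween I B A, up e)) +
          (∑ e ∈ cutN I (A ∪ B), down e +
            (∑ e ∈ edgesBetween I A B, down e + ∑ e ∈ edgesBetween I B A, down e)) := by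
      rw [routingSum, sum_ERin_union hAB, hMAB.sum_pathEdges hA hB, hMBA.sum_pathEdges hB hA]
      abel
    _ = ∑ e ∈ ERin I A, path e + ∑ e ∈ ERin I B, path e +
          (∑ e ∈ cutP I A, up e + ∑ e ∈ cutP I B, up e) +
          (∑ e ∈ cutN I A, down e + ∑ e ∈ cutN I B, down e) := by
      rw [sum_cutP_add_sum_cutP hAB, sum_cutN_add_sum_cutN hAB]
    _ = routingSum I T v A M f + routingSum I T v B M f := by
      rw [routingSum, routingSum]
      abel

end RoutingSums

section InducedCost

variable {VS VR : Type*} {τ : ℕ} [Fintype VS] [DecidableEq VS]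
  {I : VNEP VS VR τ} {T : RTree VS} {a v : VS} {A B X : Finset VR} {M : Mapping VS VR}

theorem inducedCost_eq_add_routingSum (I : VNEP VS VR τ) (T : RTree VS) (v : VS)
    (X : Finset VR) (M : Mapping VS VR) :
    inducedCost I T v X M = ∑ w ∈ X, ∑ t, I.dRv w t * I.cSv (M.mV w) t +
      routingSum I T v X M fun e e' => ∑ t, I.dRe e t * I.cSe e' t := by
  rw [inducedCost, routingSum, add_assoc, add_assoc, add_assoc]

theorem inducedCost_of_isChild (ha : T.IsChild a v) (hX : ∀ w ∈ X, T.InSubtree a (M.mV w)) :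
    inducedCost I T v X M = inducedCost I T a X M +
      ∑ e ∈ cutP I X, ∑ t, I.dRe e t * I.cSe (a, v) t +
      ∑ e ∈ cutN I X, ∑ t, I.dRe e t * I.cSe (v, a) t := by
  rw [inducedCost_eq_add_routingSum, inducedCost_eq_add_routingSum, routingSum_of_isChild ha hX,
    ← add_assoc, ← add_assoc]

theorem inducedCost_union [DecidableEq VR] (hAB : Disjoint A B)
    (hA : ∀ w ∈ A, T.InSubtree v (M.mV w)) (hB : ∀ w ∈ B, T.InSubtree v (M.mV w))
    (hMAB : M.RoutesVia I T v A B) (hMBA : M.RoutesVia I T v B A) :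
    inducedCost I T v (A ∪ B) M = inducedCost I T v A M + inducedCost I T v B M := by
  simp only [inducedCost_eq_add_routingSum]
  rw [Finset.sum_union hAB, routingSum_union hAB hA hB hMAB hMBA, add_add_add_comm]

end InducedCost

section EdgeLoad

variable {VS VR : Type*} {τ : ℕ} [Fintype VS] {I : VNEP VS VR τ}
  {T : RTree VS} {a v : VS} {X : Finset VR} {M : Mapping VS VR} {eS : VS × VS}

/-- The demand on the substrate edge `eS` that desirability of a mapping of `G_R[X]` into `T_v`
compares with the capacity of `eS`. -/
noncomputable def edgeLoad (I : VNEP VS VR τ) (T : RTree VS) (v : VS) (X : Finset VR)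
    (M : Mapping VS VR) (eS : VS × VS) (t : Fin τ) : ℝ≥0 :=
  routingSum I T v X M fun e e' => if e' = eS then I.dRe e t else 0

theorem edgeLoad_eq (I : VNEP VS VR τ) (T : RTree VS) (v : VS) (X : Finset VR)
    (M : Mapping VS VR) (eS : VS × VS) (t : Fin τ) :
    edgeLoad I T v X M eS t =
      ∑ e ∈ (ERin I X).filter (fun e => eS ∈ pathEdges (M.mE e)), I.dRe e t +
        ∑ e ∈ EvSet I T v X M.mV eS, I.dRe e t := by
  have hdisj : Disjoint ((cutP I X).filter fun e => onUp T v (M.mV e.1) eS)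
      ((cutN I X).filter fun e => onDown T v (M.mV e.2) eS) :=
    Finset.disjoint_filter_filter (Finset.disjoint_filter.2 fun _ _ hP hN => hN.1 hP.1)
  rw [EvSet, Finset.sum_union hdisj, edgeLoad, routingSum, ← add_assoc]
  simp only [Finset.sum_ite_eq', List.mem_toFinset, mem_upEdges, mem_downEdges,
    Finset.sum_filter]

theorem Desirable.edgeLoad_le (hM : Desirable I T v X M) (heS : eS ∈ I.ES)
    (h₁ : T.InSubtree v eS.1) (h₂ : T.InSubtree v eS.2) (t : Fin τ) :
    (edgeLoad I T v X M eS t : ℝ≥0∞) ≤ I.dSe eS t := by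
  rw [edgeLoad_eq]
  exact hM.2.2.2 eS heS h₁ h₂ t

theorem Desirable.edgeLoad_eq_zero (hM : Desirable I T v X M)
    (heS : ¬ (T.InSubtree v eS.1 ∧ T.InSubtree v eS.2)) (t : Fin τ) :
    edgeLoad I T v X M eS t = 0 :=
  routingSum_eq_zero hM.1 (fun e he => (hM.2.1 e he).2) fun _ _ h₁ h₂ =>
    if_neg (by rintro rfl; exact heS ⟨h₁, h₂⟩)

theorem edgeLoad_of_isChild (ha : T.IsChild a v) (hX : ∀ w ∈ X, T.InSubtree a (M.mV w))
    (eS : VS × VS) (t : Fin τ) :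
    edgeLoad I T v X M eS t = edgeLoad I T a X M eS t +
      (if (a, v) = eS then ∑ e ∈ cutP I X, I.dRe e t else 0) +
      (if (v, a) = eS then ∑ e ∈ cutN I X, I.dRe e t else 0) := by
  rw [edgeLoad, routingSum_of_isChild ha hX, Finset.sum_ite_irrel, Finset.sum_ite_irrel,
    Finset.sum_const_zero, Finset.sum_const_zero, edgeLoad]

theorem Desirable.edgeLoad_parent_eq_zero (hM : Desirable I T a X M) (ha : T.IsChild a v)
    (heS : ¬ T.OnBranch a v eS) (t : Fin τ) : edgeLoad I T v X M eS t = 0 := by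
  obtain ⟨hsub, hup, hdown⟩ : _ ∧ eS ≠ (a, v) ∧ eS ≠ (v, a) := by
    simpa only [RTree.OnBranch, not_or] using heS
  rw [edgeLoad_of_isChild ha hM.1, hM.edgeLoad_eq_zero hsub, if_neg hup.symm, if_neg hdown.symm,
    add_zero, add_zero]

end EdgeLoad

section Desirable

variable {VS VR : Type*} {τ : ℕ} {I : VNEP VS VR τ} {T : RTree VS} {a b v : VS}
  {A B X : Finset VR} {M : Mapping VS VR}

theorem Desirable.of_isChild [Finite VS] (ha : T.IsChild a v) (hM : Desirable I T a X M)
    (hcapP : ∀ t, ((∑ e ∈ cutP I X, I.dRe e t : ℝ≥0) : ℝ≥0∞) ≤ I.dSe (a, v) t)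
    (hcapN : ∀ t, ((∑ e ∈ cutN I X, I.dRe e t : ℝ≥0) : ℝ≥0∞) ≤ I.dSe (v, a) t) :
    Desirable I T v X M := by
  cases nonempty_fintype VS
  refine ⟨fun w hw => ha.inSubtree.trans (hM.1 w hw), fun e he => ?_, hM.2.2.1, ?_⟩
  · exact ⟨(hM.2.1 e he).1, fun x hx => ha.inSubtree.trans ((hM.2.1 e he).2 x hx)⟩
  intro eS heS _ _ t
  rw [← edgeLoad_eq]
  by_cases hbranch : T.OnBranch a v eS
  · rcases hbranch with ⟨h₁, h₂⟩ | rfl | rfl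
    · have hup : (a, v) ≠ eS := by
        rintro rfl
        exact ha.not_inSubtree h₂
      have hdown : (v, a) ≠ eS := by
        rintro rfl
        exact ha.not_inSubtree h₁
      rw [edgeLoad_of_isChild ha hM.1, if_neg hup, if_neg hdown, add_zero, add_zero]
      exact hM.edgeLoad_le heS h₁ h₂ t
    · have hne : (v, a) ≠ (a, v) := fun h => ha.1 (Prod.mk.inj h).2
      rw [edgeLoad_of_isChild ha hM.1, hM.edgeLoad_eq_zero fun h => ha.not_inSubtree h.2,
        if_pos rfl, if_neg hne, zero_add, add_zero]
      exact hcapP t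
    · have hne : (a, v) ≠ (v, a) := fun h => ha.1 (Prod.mk.inj h).1
      rw [edgeLoad_of_isChild ha hM.1, hM.edgeLoad_eq_zero fun h => ha.not_inSubtree h.1,
        if_neg hne, if_pos rfl, add_zero, zero_add]
      exact hcapN t
  · rw [hM.edgeLoad_parent_eq_zero ha hbranch, ENNReal.coe_zero]
    exact zero_le

theorem Mapping.RoutesVia.isDiPath
    (hES : ∀ p q, T.IsChild p q → (p, q) ∈ I.ES ∧ (q, p) ∈ I.ES)
    (ha : T.IsChild a v) (hb : T.IsChild b v) (hab : a ≠ b)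
    (hA : ∀ w ∈ A, T.InSubtree a (M.mV w)) (hB : ∀ w ∈ B, T.InSubtree b (M.mV w))
    (hM : M.RoutesVia I T v A B) {e : VR × VR} (he : e ∈ edgesBetween I A B) :
    IsDiPath (fun p q => (p, q) ∈ I.ES) (M.mV e.1) (M.mV e.2) (M.mE e) ∧
      ∀ x ∈ M.mE e, T.InSubtree v x := by
  obtain ⟨-, he₁, he₂⟩ := Finset.mem_filter.1 he
  rw [hM e he]
  exact ⟨isDiPath_pathVia hES ha hb hab (hA _ he₁) (hB _ he₂), fun x =>
    inSubtree_of_mem_pathVia (ha.inSubtree.trans (hA _ he₁)) (hb.inSubtree.trans (hB _ he₂))⟩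

theorem Desirable.nodeLoad_union_le [DecidableEq VR] (ha : T.IsChild a v) (hb : T.IsChild b v)
    (hab : a ≠ b) (hA : Desirable I T a A M) (hB : Desirable I T b B M) (s : VS) (t : Fin τ) :
    ((∑ w ∈ (A ∪ B).filter (fun w => M.mV w = s), I.dRv w t : ℝ≥0) : ℝ≥0∞) ≤ I.dSv s t := by
  rw [Finset.filter_union]
  by_cases hs : T.InSubtree a s
  · have hempty : B.filter (fun w => M.mV w = s) = ∅ := Finset.filter_false_of_mem fun w hw h =>
      ha.not_inSubtree_of_ne hb hab hs (h ▸ hB.1 w hw)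
    rw [hempty, Finset.union_empty]
    exact hA.2.2.1 s t
  · have hempty : A.filter (fun w => M.mV w = s) = ∅ := Finset.filter_false_of_mem fun w hw h =>
      hs (h ▸ hA.1 w hw)
    rw [hempty, Finset.empty_union]
    exact hB.2.2.1 s t

theorem Desirable.union [Finite VS] [DecidableEq VR]
    (hES : ∀ p q, T.IsChild p q → (p, q) ∈ I.ES ∧ (q, p) ∈ I.ES)
    (ha : T.IsChild a v) (hb : T.IsChild b v) (hab : a ≠ b) (hAB : Disjoint A B)
    (hA : Desirable I T a A M) (hB : Desirable I T b B M)
    (hAv : Desirable I T v A M) (hBv : Desirable I T v B M)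
    (hMAB : M.RoutesVia I T v A B) (hMBA : M.RoutesVia I T v B A) :
    Desirable I T v (A ∪ B) M := by
  cases nonempty_fintype VS
  refine ⟨fun w hw => ?_, fun e he => ?_, hA.nodeLoad_union_le ha hb hab hB, ?_⟩
  · exact (Finset.mem_union.1 hw).elim (hAv.1 w) (hBv.1 w)
  · rcases mem_ERin_union he with he | he | he | he
    · exact hAv.2.1 e he
    · exact hBv.2.1 e he
    · exact hMAB.isDiPath hES ha hb hab hA.1 hB.1 he
    · exact hMBA.isDiPath hES hb ha hab.symm hB.1 hA.1 he
  · intro eS heS h₁ h₂ t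
    have hadd : edgeLoad I T v (A ∪ B) M eS t =
        edgeLoad I T v A M eS t + edgeLoad I T v B M eS t :=
      routingSum_union hAB hAv.1 hBv.1 hMAB hMBA _
    rw [← edgeLoad_eq, hadd]
    by_cases hbranch : T.OnBranch a v eS
    · rw [hB.edgeLoad_parent_eq_zero hb (hbranch.not_onBranch_of_ne ha hb hab), add_zero]
      exact hAv.edgeLoad_le heS h₁ h₂ t
    · rw [hA.edgeLoad_parent_eq_zero ha hbranch, zero_add]
      exact hBv.edgeLoad_le heS h₁ h₂ t

end Desirable

section CombineMapping

variable {VS VR : Type*} {τ : ℕ} {I : VNEP VS VR τ} {T : RTree VS} {v : VS}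
  {A B X : Finset VR} {M M' Ma Mb : Mapping VS VR}

/-- `M` and `M'` restrict to the same mapping of `G_R[X]`. -/
def Mapping.AgreesOn (I : VNEP VS VR τ) (X : Finset VR) (M M' : Mapping VS VR) : Prop :=
  (∀ w ∈ X, M.mV w = M'.mV w) ∧ ∀ e ∈ ERin I X, M.mE e = M'.mE e

theorem Mapping.AgreesOn.inducedCost_eq [Fintype VS] [DecidableEq VS]
    (h : M.AgreesOn I X M') : inducedCost I T v X M = inducedCost I T v X M' := by
  rw [inducedCost, inducedCost]
  congr 1
  · congr 1
    · congr 1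
      · exact Finset.sum_congr rfl fun w hw => by rw [h.1 w hw]
      · exact Finset.sum_congr rfl fun e he => by rw [h.2 e he]
    · exact Finset.sum_congr rfl fun e he => by rw [h.1 _ (fst_mem_of_mem_cutP he)]
  · exact Finset.sum_congr rfl fun e he => by rw [h.1 _ (snd_mem_of_mem_cutN he)]

theorem Mapping.AgreesOn.EvSet_eq (h : M.AgreesOn I X M') (eS : VS × VS) :
    EvSet I T v X M.mV eS = EvSet I T v X M'.mV eS := by
  rw [EvSet, EvSet]
  congr 1
  · exact Finset.filter_congr fun e he => by rw [h.1 _ (fst_mem_of_mem_cutP he)]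
  · exact Finset.filter_congr fun e he => by rw [h.1 _ (snd_mem_of_mem_cutN he)]

theorem Desirable.of_agreesOn (hM' : Desirable I T v X M') (h : M.AgreesOn I X M') :
    Desirable I T v X M := by
  refine ⟨fun w hw => h.1 w hw ▸ hM'.1 w hw, fun e he => ?_, fun s t => ?_, ?_⟩
  · obtain ⟨-, he₁, he₂⟩ := Finset.mem_filter.1 he
    rw [h.1 _ he₁, h.1 _ he₂, h.2 e he]
    exact hM'.2.1 e he
  · have hnodes : X.filter (fun w => M.mV w = s) = X.filter (fun w => M'.mV w = s) :=
      Finset.filter_congr fun w hw => by rw [h.1 w hw]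
    rw [hnodes]
    exact hM'.2.2.1 s t
  · intro eS heS h₁ h₂ t
    have hedges : (ERin I X).filter (fun e => eS ∈ pathEdges (M.mE e)) =
        (ERin I X).filter (fun e => eS ∈ pathEdges (M'.mE e)) :=
      Finset.filter_congr fun e he => by rw [h.2 e he]
    rw [hedges, h.EvSet_eq]
    exact hM'.2.2.2 eS heS h₁ h₂ t

theorem combineMapping_agreesOn_left :
    (combineMapping T v A B Ma Mb).AgreesOn I A Ma :=
  ⟨fun _ hw => if_pos hw, fun _ he => if_pos (Finset.mem_filter.1 he).2⟩

theorem combineMapping_agreesOn_right (hAB : Disjoint A B) :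
    (combineMapping T v A B Ma Mb).AgreesOn I B Mb := by
  refine ⟨fun w hw => if_neg (Finset.disjoint_right.1 hAB hw), fun e he => ?_⟩
  obtain ⟨-, he₁, he₂⟩ := Finset.mem_filter.1 he
  simp only [combineMapping, Finset.disjoint_right.1 hAB he₁, he₁, he₂, false_and, and_self,
    if_true, if_false]

theorem combineMapping_routesVia (hAB : Disjoint A B) :
    (combineMapping T v A B Ma Mb).RoutesVia I T v A B := by
  intro e he
  obtain ⟨-, he₁, he₂⟩ := Finset.mem_filter.1 he
  simp only [combineMapping, pathVia, Finset.disjoint_left.1 hAB he₁,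
    Finset.disjoint_right.1 hAB he₂, he₁, he₂, false_and, and_false, and_self, if_true, if_false]

theorem combineMapping_routesVia_symm (hAB : Disjoint A B) :
    (combineMapping T v A B Ma Mb).RoutesVia I T v B A := by
  intro e he
  obtain ⟨-, he₁, he₂⟩ := Finset.mem_filter.1 he
  simp only [combineMapping, pathVia, Finset.disjoint_right.1 hAB he₁,
    Finset.disjoint_left.1 hAB he₂, he₁, he₂, false_and, and_false, and_self, if_true, if_false]

end CombineMapping

theorem combine_desirable_mappings_general {VS VR : Type*} [Fintype VS] [DecidableEq VS]
    [DecidableEq VR] {τ : ℕ} (I : VNEP VS VR τ) (T : RTree VS) (hES : T.edges ⊆ I.ES)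
    (v a b : VS) (hab : a ≠ b) (ha : T.IsChild a v) (hb : T.IsChild b v)
    (A B : Finset VR) (hAB : Disjoint A B) (Ma Mb : Mapping VS VR)
    (hMa : Desirable I T a A Ma) (hMb : Desirable I T b B Mb)
    (hcapPA : ∀ t, ((∑ e ∈ cutP I A, I.dRe e t : ℝ≥0) : ℝ≥0∞) ≤ I.dSe (a, v) t)
    (hcapNA : ∀ t, ((∑ e ∈ cutN I A, I.dRe e t : ℝ≥0) : ℝ≥0∞) ≤ I.dSe (v, a) t)
    (hcapPB : ∀ t, ((∑ e ∈ cutP I B, I.dRe e t : ℝ≥0) : ℝ≥0∞) ≤ I.dSe (b, v) t)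
    (hcapNB : ∀ t, ((∑ e ∈ cutN I B, I.dRe e t : ℝ≥0) : ℝ≥0∞) ≤ I.dSe (v, b) t) :
    Desirable I T v (A ∪ B) (combineMapping T v A B Ma Mb) ∧
    inducedCost I T v (A ∪ B) (combineMapping T v A B Ma Mb) =
      inducedCost I T a A Ma + inducedCost I T b B Mb +
      (∑ e ∈ cutN I A, ∑ t, I.dRe e t * I.cSe (v, a) t) +
      (∑ e ∈ cutP I A, ∑ t, I.dRe e t * I.cSe (a, v) t) +
      (∑ e ∈ cutN I B, ∑ t, I.dRe e t * I.cSe (v, b) t) +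
      (∑ e ∈ cutP I B, ∑ t, I.dRe e t * I.cSe (b, v) t) := by
  set M := combineMapping T v A B Ma Mb
  have hMA : M.AgreesOn I A Ma := combineMapping_agreesOn_left
  have hMB : M.AgreesOn I B Mb := combineMapping_agreesOn_right hAB
  have hMAB : M.RoutesVia I T v A B := combineMapping_routesVia hAB
  have hMBA : M.RoutesVia I T v B A := combineMapping_routesVia_symm hAB
  have hA : Desirable I T a A M := hMa.of_agreesOn hMA
  have hB : Desirable I T b B M := hMb.of_agreesOn hMB
  have hAv : Desirable I T v A M := hA.of_isChild ha hcapPA hcapNA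
  have hBv : Desirable I T v B M := hB.of_isChild hb hcapPB hcapNB
  have hES' p q (h : T.IsChild p q) := And.imp (@hES _) (@hES _) h.mem_edges
  refine ⟨hA.union hES' ha hb hab hAB hB hAv hBv hMAB hMBA, ?_⟩
  rw [inducedCost_union hAB hAv.1 hBv.1 hMAB hMBA, inducedCost_of_isChild ha hA.1,
    inducedCost_of_isChild hb hB.1, hMA.inducedCost_eq, hMB.inducedCost_eq]
  abel

/-- Combination step of the DP correctness proof: in the DP setting, given disjoint `A`, `B`
with `X = A ∪ B`, a desirable mapping of `G_R[A]` into `T_a` and a desirable mapping of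
`G_R[B]` into `T_b` (for the two children `a`, `b` of `v`), such that the cut demands fit
into the capacities of the four edges between `v` and its children, the combined mapping is
a desirable mapping of `G_R[X]` into `T_v`, and its induced cost is the sum of the two
induced costs plus the cost of routing the cut edges over the edges between `v` and its
children. -/
theorem combine_desirable_mappings {VS VR : Type*} [Fintype VS] [DecidableEq VS]
    [Fintype VR] [DecidableEq VR] {τ : ℕ} (I : VNEP VS VR τ) (T : RTree VS)
    (hDP : DPSetting I T) (v a b : VS) (hab : a ≠ b) (hch : childrenOf T v = {a, b})
    (A B : Finset VR) (hAB : Disjoint A B) (Ma Mb : Mapping VS VR)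
    (hMa : Desirable I T a A Ma) (hMb : Desirable I T b B Mb)
    (hcapPA : ∀ t, ((∑ e ∈ cutP I A, I.dRe e t : ℝ≥0) : ℝ≥0∞) ≤ I.dSe (a, v) t)
    (hcapNA : ∀ t, ((∑ e ∈ cutN I A, I.dRe e t : ℝ≥0) : ℝ≥0∞) ≤ I.dSe (v, a) t)
    (hcapPB : ∀ t, ((∑ e ∈ cutP I B, I.dRe e t : ℝ≥0) : ℝ≥0∞) ≤ I.dSe (b, v) t)
    (hcapNB : ∀ t, ((∑ e ∈ cutN I B, I.dRe e t : ℝ≥0) : ℝ≥0∞) ≤ I.dSe (v, b) t) :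
    Desirable I T v (A ∪ B) (combineMapping T v A B Ma Mb) ∧
    inducedCost I T v (A ∪ B) (combineMapping T v A B Ma Mb) =
      inducedCost I T a A Ma + inducedCost I T b B Mb +
      (∑ e ∈ cutN I A, ∑ t, I.dRe e t * I.cSe (v, a) t) +
      (∑ e ∈ cutP I A, ∑ t, I.dRe e t * I.cSe (a, v) t) +
      (∑ e ∈ cutN I B, ∑ t, I.dRe e t * I.cSe (v, b) t) +
      (∑ e ∈ cutP I B, ∑ t, I.dRe e t * I.cSe (b, v) t) :=
  combine_desirable_mappings_general I T hDP.1.ge v a b hab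
    (RTree.mem_childrenOf.1 (hch ▸ Finset.mem_insert_self a {b}))
    (RTree.mem_childrenOf.1 (hch ▸ Finset.mem_insert_of_mem (Finset.mem_singleton_self b)))
    A B hAB Ma Mb hMa hMb hcapPA hcapNA hcapPB hcapNB
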